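/- Let R be a reduced commutative ring, I a minimal prime ideal of R, and e ∈ R an idempotent element. If the ideal N = I + ann(e) is a proper ideal of R, then N is an r-ideal. -/

import Mathlib

/-- A proper ideal `N` of a commutative ring is an `r`-ideal if whenever
`a * b ∈ N` and `ann(a) = 0` (i.e. `a` is regular), then `b ∈ N`. -/
def IsRIdeal {R : Type*} [CommRing R] (N : Ideal R) : Prop :=
  N ≠ ⊤ ∧ ∀ a b : R, a * b ∈ N → (∀ r : R, r * a = 0 → r = 0) → b ∈ N

/-- The annihilator ideal `ann(x) = {r ∈ R : r * x = 0}`. -/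
def annIdeal {R : Type*} [CommRing R] (x : R) : Ideal R where
  carrier := {r : R | r * x = 0}
  add_mem' := by
    intro a b ha hb
    simp only [Set.mem_setOf_eq] at *
    rw [add_mul, ha, hb, add_zero]
  zero_mem' := by simp
  smul_mem' := by
    intro c a ha
    simp only [Set.mem_setOf_eq, smul_eq_mul] at *
    rw [mul_assoc, ha, mul_zero]

section

variable {R : Type*} [CommRing R] {I : Ideal R} {e : R}

theorem isRIdeal_of_isPrime_of_disjoint_nonZeroDivisors (hI : I.IsPrime)
    (hdisj : Disjoint (I : Set R) (nonZeroDivisors R)) : IsRIdeal I := by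
  refine ⟨hI.ne_top, fun a b hab ha ↦ (hI.mem_or_mem hab).resolve_left fun haI ↦ ?_⟩
  exact Set.disjoint_left.mp hdisj haI (mem_nonZeroDivisors_iff_right.mpr ha)

theorem isRIdeal_of_mem_minimalPrimes (hI : I ∈ minimalPrimes R) : IsRIdeal I :=
  isRIdeal_of_isPrime_of_disjoint_nonZeroDivisors hI.1.1
    (Ideal.disjoint_nonZeroDivisors_of_mem_minimalPrimes hI)

theorem mem_annIdeal {x r : R} : r ∈ annIdeal x ↔ r * x = 0 :=
  Iff.rfl

theorem mem_add_annIdeal_iff_mul_mem (he : IsIdempotentElem e) {b : R} :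
    b ∈ I + annIdeal e ↔ b * e ∈ I := by
  rw [Submodule.add_eq_sup, Submodule.mem_sup]
  constructor
  · rintro ⟨i, hi, r, hr, rfl⟩
    rw [add_mul, mem_annIdeal.mp hr, add_zero]
    exact I.mul_mem_right e hi
  · intro hbe
    have hann : b - b * e ∈ annIdeal e := by
      rw [mem_annIdeal, sub_mul, mul_assoc, he.eq, sub_self]
    exact ⟨b * e, hbe, b - b * e, hann, add_sub_cancel _ _⟩

theorem minimalPrime_add_ann_isRIdeal_general (hI : IsRIdeal I) (he : IsIdempotentElem e)
    (hproper : I + annIdeal e ≠ ⊤) : IsRIdeal (I + annIdeal e) := by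
  refine ⟨hproper, fun a b hab ha ↦ ?_⟩
  rw [mem_add_annIdeal_iff_mul_mem he] at hab ⊢
  rw [mul_assoc] at hab
  exact hI.2 a (b * e) hab ha

end

/-- in a reduced ring, if `I` is a minimal prime, `e` is idempotent
and `N = I + ann(e)` is proper, then `N` is an `r`-ideal. -/
theorem minimalPrime_add_ann_isRIdeal {R : Type*} [CommRing R] [IsReduced R]
    (I : Ideal R) (hI : I ∈ minimalPrimes R) (e : R) (he : e * e = e)
    (hproper : I + annIdeal e ≠ ⊤) :
    IsRIdeal (I + annIdeal e) :=
  minimalPrime_add_ann_isRIdeal_general (isRIdeal_of_mem_minimalPrimes hI) he hproper
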